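/- arXiv:math/0702077 — 2 statements merged into one kernel-verified Lean document; each statement's English description precedes it below -/
import Mathlib

section
/- Let f and h be symmetric real 7×7 matrices and define the totally antisymmetric 3-tensors F_{ijk} = Σ_l (f_{il} φ_{ljk} + f_{jl} φ_{ilk} + f_{kl} φ_{ijl}) and H_{ijk} = Σ_l (h_{il} φ_{ljk} + h_{jl} φ_{ilk} + h_{kl} φ_{ijl}) (the components of the 3-forms i(f) and i(h)). Then (1/6) Σ_{i,j,k} F_{ijk} H_{ijk} = tr(f) tr(h) + 2 tr(f h). -/
open Finset

noncomputable section

def phi0 : Fin 7 → Fin 7 → Fin 7 → ℝ := fun i j k =>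
  if (i, j, k) = (0, 1, 2) then -1
  else if (i, j, k) = (0, 3, 4) then -1
  else if (i, j, k) = (0, 5, 6) then -1
  else if (i, j, k) = (1, 3, 5) then -1
  else if (i, j, k) = (1, 4, 6) then 1
  else if (i, j, k) = (2, 3, 6) then 1
  else if (i, j, k) = (2, 4, 5) then 1
  else 0

/-- The standard G₂ 3-form on ℝ⁷ (paper's orientation convention), as a totally
antisymmetric array with `φ₁₂₃ = φ₁₄₅ = φ₁₆₇ = φ₂₄₆ = −1`, `φ₂₅₇ = φ₃₄₇ = φ₃₅₆ = 1`
(indices shifted to start at 0). -/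
def phi (i j k : Fin 7) : ℝ :=
  ∑ σ : Equiv.Perm (Fin 3),
    ((Equiv.Perm.sign σ : ℤ) : ℝ) *
      phi0 (![i, j, k] (σ 0)) (![i, j, k] (σ 1)) (![i, j, k] (σ 2))

def psi0 : Fin 7 → Fin 7 → Fin 7 → Fin 7 → ℝ := fun i j k l =>
  if (i, j, k, l) = (0, 1, 3, 6) then 1
  else if (i, j, k, l) = (0, 1, 4, 5) then 1
  else if (i, j, k, l) = (0, 2, 3, 5) then 1
  else if (i, j, k, l) = (0, 2, 4, 6) then -1
  else if (i, j, k, l) = (1, 2, 3, 4) then -1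
  else if (i, j, k, l) = (1, 2, 5, 6) then -1
  else if (i, j, k, l) = (3, 4, 5, 6) then -1
  else 0

/-- The dual 4-form ψ = ∗φ of the standard G₂-structure, as a totally antisymmetric
array with `ψ₁₂₄₇ = ψ₁₂₅₆ = ψ₁₃₄₆ = 1`, `ψ₁₃₅₇ = ψ₂₃₄₅ = ψ₂₃₆₇ = ψ₄₅₆₇ = −1`
(indices shifted to start at 0). -/
def psi (i j k l : Fin 7) : ℝ :=
  ∑ σ : Equiv.Perm (Fin 4),
    ((Equiv.Perm.sign σ : ℤ) : ℝ) *
      psi0 (![i, j, k, l] (σ 0)) (![i, j, k, l] (σ 1)) (![i, j, k, l] (σ 2))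
        (![i, j, k, l] (σ 3))

/-- Kronecker delta. -/
def kdelta (i j : Fin 7) : ℝ := if i = j then 1 else 0

/-- The G₂ cross product on ℝ⁷: `(u × v)_k = Σ_{i,j} φ_{ijk} u_i v_j`. -/
def cross (u v : Fin 7 → ℝ) : Fin 7 → ℝ := fun k =>
  ∑ i, ∑ j, phi i j k * u i * v j

/-- Euclidean inner product on ℝ⁷. -/
def dot (u v : Fin 7 → ℝ) : ℝ := ∑ i, u i * v i

end

def phiZ0 (i j k : Fin 7) : ℤ :=
  if (i, j, k) = (0, 1, 2) then -1
  else if (i, j, k) = (0, 3, 4) then -1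
  else if (i, j, k) = (0, 5, 6) then -1
  else if (i, j, k) = (1, 3, 5) then -1
  else if (i, j, k) = (1, 4, 6) then 1
  else if (i, j, k) = (2, 3, 6) then 1
  else if (i, j, k) = (2, 4, 5) then 1
  else 0

def phiZ (i j k : Fin 7) : ℤ :=
  phiZ0 i j k - phiZ0 j i k - phiZ0 k j i - phiZ0 i k j + phiZ0 j k i + phiZ0 k i j

lemma phi0_cast (i j k : Fin 7) : phi0 i j k = (phiZ0 i j k : ℝ) := by
  unfold phi0 phiZ0
  push_cast
  rfl

lemma perm3_sum (F : Equiv.Perm (Fin 3) → ℝ) : ∑ σ, F σ =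
    F 1 + F (Equiv.swap 0 1) + F (Equiv.swap 0 2) + F (Equiv.swap 1 2)
    + F (Equiv.swap 0 1 * Equiv.swap 1 2) + F (Equiv.swap 1 2 * Equiv.swap 0 1) := by
  have : (Finset.univ : Finset (Equiv.Perm (Fin 3))) =
    {1, Equiv.swap 0 1, Equiv.swap 0 2, Equiv.swap 1 2,
      Equiv.swap 0 1 * Equiv.swap 1 2, Equiv.swap 1 2 * Equiv.swap 0 1} := by decide
  rw [this]
  repeat rw [Finset.sum_insert (by decide)]
  rw [Finset.sum_singleton]
  ring

lemma phi_cast (i j k : Fin 7) : phi i j k = (phiZ i j k : ℝ) := by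
  unfold phi phiZ
  rw [perm3_sum]
  have a1 : (Equiv.swap (0 : Fin 3) 1) 2 = 2 := by decide
  have a2 : (Equiv.swap (0 : Fin 3) 2) 1 = 1 := by decide
  have a3 : (Equiv.swap (1 : Fin 3) 2) 0 = 0 := by decide
  have s1 : Equiv.Perm.sign (Equiv.swap (0 : Fin 3) 1) = -1 := by decide
  have s2 : Equiv.Perm.sign (Equiv.swap (0 : Fin 3) 2) = -1 := by decide
  have s3 : Equiv.Perm.sign (Equiv.swap (1 : Fin 3) 2) = -1 := by decide
  simp only [Equiv.Perm.sign_mul, Equiv.Perm.sign_one, s1, s2, s3, Equiv.Perm.mul_apply,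
    Equiv.swap_apply_left, Equiv.swap_apply_right, a1, a2, a3, phi0_cast, Equiv.Perm.one_apply]
  simp
  ring

lemma phi_cyc (i j k : Fin 7) : phi i j k = phi j k i := by
  simp only [phi_cast, phiZ]; push_cast; ring

lemma phi_anti (i j k : Fin 7) : phi i j k = - phi i k j := by
  simp only [phi_cast, phiZ]; push_cast; ring

lemma phiZ_A : ∀ l m : Fin 7, ∑ j, ∑ k, phiZ l j k * phiZ m j k = if l = m then 6 else 0 := by
  decide +kernel

lemma phiZ_B : ∀ i j l m : Fin 7,
    ∑ k, (phiZ l j k * phiZ m k i + phiZ i j k * phiZ m k l) =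
      2 * ((if i = l then 1 else 0) * (if j = m then 1 else 0))
      - (if l = m then 1 else 0) * (if i = j then 1 else 0)
      - (if i = m then 1 else 0) * (if l = j then 1 else 0) := by
  decide +kernel

lemma phi_A (l m : Fin 7) : ∑ j, ∑ k, phi l j k * phi m j k = if l = m then 6 else 0 := by
  simp only [phi_cast]
  exact_mod_cast phiZ_A l m

lemma phi_B (i j l m : Fin 7) :
    ∑ k, (phi l j k * phi m k i + phi i j k * phi m k l) =
      2 * ((if i = l then 1 else 0) * (if j = m then 1 else 0))
      - (if l = m then 1 else 0) * (if i = j then 1 else 0)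
      - (if i = m then 1 else 0) * (if l = j then 1 else 0) := by
  simp only [phi_cast]
  exact_mod_cast phiZ_B i j l m

def PP (f : Fin 7 → Fin 7 → ℝ) (i j k : Fin 7) : ℝ := ∑ l, f i l * phi l j k

lemma PP_anti (f : Fin 7 → Fin 7 → ℝ) (i j k : Fin 7) : PP f i j k = - PP f i k j := by
  unfold PP
  rw [← Finset.sum_neg_distrib]
  exact Finset.sum_congr rfl fun l _ => by rw [phi_anti l j k]; ring

lemma F_eq (f : Fin 7 → Fin 7 → ℝ) (i j k : Fin 7) :
    ∑ l, (f i l * phi l j k + f j l * phi i l k + f k l * phi i j l)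
      = PP f i j k + PP f j k i + PP f k i j := by
  unfold PP
  simp only [Finset.sum_add_distrib]
  congr 1
  · congr 1
    exact Finset.sum_congr rfl fun l _ => by rw [phi_cyc i l k]
  · exact Finset.sum_congr rfl fun l _ => by rw [phi_cyc l i j]

lemma sum_cyc (G : Fin 7 → Fin 7 → Fin 7 → ℝ) :
    ∑ i, ∑ j, ∑ k, G j k i = ∑ i, ∑ j, ∑ k, G i j k := by
  rw [Finset.sum_comm]
  exact Finset.sum_congr rfl fun j _ => Finset.sum_comm

lemma diag (f h : Fin 7 → Fin 7 → ℝ) :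
    ∑ i, ∑ j, ∑ k, PP f i j k * PP h i j k = 6 * ∑ i, ∑ l, f i l * h i l := by
  rw [Finset.mul_sum]
  refine Finset.sum_congr rfl fun i _ => ?_
  have : ∀ j k, PP f i j k * PP h i j k
      = ∑ l, ∑ m, f i l * h i m * (phi l j k * phi m j k) := by
    intro j k
    unfold PP
    rw [Finset.sum_mul_sum]
    exact Finset.sum_congr rfl fun l _ => Finset.sum_congr rfl fun m _ => by ring
  simp only [this]
  calc _ = ∑ l, ∑ m, f i l * h i m * ∑ j, ∑ k, phi l j k * phi m j k := by
        simp only [Finset.mul_sum]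
        simp only [← Fintype.sum_prod_type']
        exact Fintype.sum_equiv (ι := Fin 7 × Fin 7 × Fin 7 × Fin 7) (κ := Fin 7 × Fin 7 × Fin 7 × Fin 7)
          ⟨fun p => (p.2.2.1, p.2.2.2, p.1, p.2.1), fun p => (p.2.2.1, p.2.2.2, p.1, p.2.1),
            fun _ => rfl, fun _ => rfl⟩ _ _ fun _ => rfl
    _ = _ := by
        simp only [phi_A, mul_ite, mul_zero, Finset.sum_ite_eq, Finset.mem_univ, if_true,
          Finset.mul_sum]
        exact Finset.sum_congr rfl fun l _ => by ring

lemma delta1 (f h : Fin 7 → Fin 7 → ℝ) : ∑ i, ∑ l, ∑ j, ∑ m, f i l * h j m *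
    (2 * ((if i = l then 1 else 0) * (if j = m then 1 else 0)))
    = 2 * ((∑ i, f i i) * (∑ i, h i i)) := by
  have : ∀ i l j m, f i l * h j m * (2 * ((if i = l then 1 else 0) * (if j = m then 1 else 0)))
    = if j = m then (if i = l then 2 * (f i l * h j m) else 0) else 0 := by
    intro i l j m; split_ifs <;> ring
  simp only [this, Finset.sum_ite_eq, Finset.mem_univ, if_true]
  rw [Finset.sum_mul_sum, Finset.mul_sum]
  refine Finset.sum_congr rfl fun i _ => ?_
  rw [Finset.sum_comm, Finset.mul_sum]
  simp only [Finset.sum_ite_eq, Finset.mem_univ, if_true]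

lemma delta2 (f h : Fin 7 → Fin 7 → ℝ) : ∑ i, ∑ l, ∑ j, ∑ m, f i l * h j m *
    ((if l = m then 1 else 0) * (if i = j then 1 else 0))
    = ∑ i, ∑ l, f i l * h i l := by
  have : ∀ i l j m, f i l * h j m * ((if l = m then 1 else 0) * (if i = j then 1 else 0))
    = if l = m then (if i = j then (f i l * h j m) else 0) else 0 := by
    intro i l j m; split_ifs <;> ring
  simp only [this, Finset.sum_ite_eq, Finset.mem_univ, if_true]

lemma delta3 (f h : Fin 7 → Fin 7 → ℝ) : ∑ i, ∑ l, ∑ j, ∑ m, f i l * h j m *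
    ((if i = m then 1 else 0) * (if l = j then 1 else 0))
    = ∑ i, ∑ l, f i l * h l i := by
  have : ∀ i l j m, f i l * h j m * ((if i = m then 1 else 0) * (if l = j then 1 else 0))
    = if i = m then (if l = j then (f i l * h j m) else 0) else 0 := by
    intro i l j m; split_ifs <;> ring
  simp only [this, Finset.sum_ite_eq, Finset.mem_univ, if_true]

lemma offdiag (f h : Fin 7 → Fin 7 → ℝ) (hf : ∀ i j, f j i = f i j) (hh : ∀ i j, h j i = h i j) :
    ∑ i, ∑ j, ∑ k, PP f i j k * PP h j k i
      = (∑ i, f i i) * (∑ i, h i i) - ∑ i, ∑ l, f i l * h i l := by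
  have e : ∑ i, ∑ j, ∑ k, PP f i j k * PP h j k i
      = ∑ i, ∑ l, ∑ j, ∑ m, f i l * h j m * ∑ k, phi l j k * phi m k i := by
    have : ∀ i j k, PP f i j k * PP h j k i
        = ∑ l, ∑ m, f i l * h j m * (phi l j k * phi m k i) := by
      intro i j k
      unfold PP
      rw [Finset.sum_mul_sum]
      exact Finset.sum_congr rfl fun l _ => Finset.sum_congr rfl fun m _ => by ring
    simp only [this, Finset.mul_sum]
    refine Finset.sum_congr rfl fun i _ => ?_
    simp only [← Fintype.sum_prod_type']
    exact Fintype.sum_equiv (ι := Fin 7 × Fin 7 × Fin 7 × Fin 7) (κ := Fin 7 × Fin 7 × Fin 7 × Fin 7)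
      ⟨fun p => (p.2.2.1, p.1, p.2.2.2, p.2.1), fun p => (p.2.1, p.2.2.2, p.1, p.2.2.1),
        fun _ => rfl, fun _ => rfl⟩ _ _ fun _ => rfl
  have e2 : ∑ i, ∑ l, ∑ j, ∑ m, f i l * h j m * ∑ k, phi l j k * phi m k i
      = ∑ i, ∑ l, ∑ j, ∑ m, f i l * h j m * ∑ k, phi i j k * phi m k l := by
    rw [Finset.sum_comm]
    refine Finset.sum_congr rfl fun i _ => Finset.sum_congr rfl fun l _ => ?_
    rw [hf]
  have e3 : 2 * ∑ i, ∑ j, ∑ k, PP f i j k * PP h j k i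
      = ∑ i, ∑ l, ∑ j, ∑ m, f i l * h j m *
        (2 * ((if i = l then 1 else 0) * (if j = m then 1 else 0))
      - (if l = m then 1 else 0) * (if i = j then 1 else 0)
      - (if i = m then 1 else 0) * (if l = j then 1 else 0)) := by
    rw [two_mul]
    nth_rewrite 2 [e]
    rw [e2, e]
    simp only [← Finset.sum_add_distrib, ← mul_add, phi_B]
  have e4 : ∑ i, ∑ l, ∑ j, ∑ m, f i l * h j m *
        (2 * ((if i = l then 1 else 0) * (if j = m then 1 else 0))
      - (if l = m then 1 else 0) * (if i = j then 1 else 0)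
      - (if i = m then 1 else 0) * (if l = j then 1 else 0))
      = 2 * ((∑ i, f i i) * (∑ i, h i i)) - ∑ i, ∑ l, f i l * h i l
        - ∑ i, ∑ l, f i l * h l i := by
    simp only [mul_sub, Finset.sum_sub_distrib]
    rw [delta1, delta2, delta3]
  have e5 : ∑ i, ∑ l, f i l * h l i = ∑ i, ∑ l, f i l * h i l :=
    Finset.sum_congr rfl fun l _ => Finset.sum_congr rfl fun m _ => by rw [hh]
  linarith

/-- Proposition `symmmetricprop`: the inner product of the 3-forms i(f) and i(h)
associated to symmetric matrices f, h equals tr(f) tr(h) + 2 tr(f h). -/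
theorem inner_product_symmetric_three_forms (f h : Fin 7 → Fin 7 → ℝ)
    (hf : ∀ i j, f j i = f i j) (hh : ∀ i j, h j i = h i j) :
    (1/6) * ∑ i, ∑ j, ∑ k,
      (∑ l, (f i l * phi l j k + f j l * phi i l k + f k l * phi i j l)) *
      (∑ l, (h i l * phi l j k + h j l * phi i l k + h k l * phi i j l))
      = (∑ i, f i i) * (∑ i, h i i) + 2 * ∑ i, ∑ j, f i j * h j i := by
  simp only [F_eq]
  have e5 : ∑ i, ∑ l, f i l * h l i = ∑ i, ∑ l, f i l * h i l :=
    Finset.sum_congr rfl fun l _ => Finset.sum_congr rfl fun m _ => by rw [hh]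
  have hd := diag f h
  have ho := offdiag f h hf hh
  have ho' : ∑ i, ∑ j, ∑ k, PP f i j k * PP h k i j = ∑ i, ∑ j, ∑ k, PP f i j k * PP h j k i := by
    refine Finset.sum_congr rfl fun i _ => ?_
    rw [Finset.sum_comm]
    refine Finset.sum_congr rfl fun j _ => Finset.sum_congr rfl fun k _ => ?_
    rw [PP_anti f i k j, PP_anti h j i k]; ring
  set G : Fin 7 → Fin 7 → Fin 7 → ℝ :=
    fun i j k => PP f i j k * (PP h i j k + PP h j k i + PP h k i j) with hG
  have hs : ∑ i, ∑ j, ∑ k, (PP f i j k + PP f j k i + PP f k i j) *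
      (PP h i j k + PP h j k i + PP h k i j) = 3 * ∑ i, ∑ j, ∑ k, G i j k := by
    have h1 := sum_cyc G
    have h2 := sum_cyc (fun i j k => G j k i)
    have : ∀ i j k, (PP f i j k + PP f j k i + PP f k i j) *
      (PP h i j k + PP h j k i + PP h k i j) = G i j k + G j k i + G k i j := by
      intro i j k; simp only [hG]; ring
    simp only [this, Finset.sum_add_distrib]
    linarith
  have hg : ∑ i, ∑ j, ∑ k, G i j k = ∑ i, ∑ j, ∑ k, PP f i j k * PP h i j k
      + ∑ i, ∑ j, ∑ k, PP f i j k * PP h j k i + ∑ i, ∑ j, ∑ k, PP f i j k * PP h k i j := by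
    simp only [hG, mul_add, Finset.sum_add_distrib]
  rw [hs, hg, ho', hd, ho, e5]
  ring
end

section
/- For all indices i,j,l ∈ {1,…,7} and every vector α ∈ ℝ⁷: Σ_{σ∈S₇} sgn(σ) φ_{i σ(1) σ(2)} φ_{j σ(3) σ(4)} φ_{l σ(5) σ(6)} α_{σ(7)} = −16 (δ_{ij} α_l + δ_{il} α_j + δ_{jl} α_i). (This is the coordinate form of the identity ∗((u⌐φ)∧(v⌐φ)∧(w⌐φ)) = −2 g(u,v) w♭ − 2 g(u,w) v♭ − 2 g(v,w) u♭ for the standard G₂-structure.) -/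
open Finset

/-- All choices of a first entry, with sign and list of remaining entries. -/
def choices (n : ℕ) : List (Fin 7) → List (ℤ × Fin 7 × List (Fin 7))
  | [] => []
  | a :: t => (1, a, t) :: (List.range n).map (fun m => (-1, t.getD m a, t.set m a))

/-- Recursive signed sum over all rearrangements of a list. -/
def LS : ℕ → List (Fin 7) → (List (Fin 7) → ℝ) → ℝ
  | 0, _, F => F []
  | n + 1, L, F =>
    ((choices n L).map fun x => (x.1 : ℝ) * LS n x.2.2 (fun l => F (x.2.1 :: l))).sum

theorem list_range_sum (n : ℕ) (f : ℕ → ℝ) :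
    ((List.range n).map f).sum = ∑ m : Fin n, f m := by
  rw [← Finset.sum_range]; rfl

theorem perm_sum_eq_LS (n : ℕ) : ∀ (v : Fin n → Fin 7) (F : List (Fin 7) → ℝ),
    ∑ σ : Equiv.Perm (Fin n), ((Equiv.Perm.sign σ : ℤ) : ℝ) * F (List.ofFn (fun x => v (σ x)))
      = LS n (List.ofFn v) F := by
  induction n with
  | zero => intro v F; simp [LS]
  | succ n ih =>
    intro v F
    rw [← Equiv.sum_comp Equiv.Perm.decomposeFin.symm, Fintype.sum_prod_type, Fin.sum_univ_succ]
    rw [List.ofFn_succ, LS, choices, List.map_cons, List.sum_cons, List.map_map, list_range_sum]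
    congr 1
    · rw [← ih]
      simp [List.ofFn_succ]
    · refine Finset.sum_congr rfl fun p _ => ?_
      have h1 : (List.ofFn fun i => v (Fin.succ i)).set p (v 0)
          = List.ofFn (fun x : Fin n => v (Equiv.swap 0 p.succ x.succ)) := by
        apply List.ext_getElem
        · simp
        · intro m h1 h2
          simp only [List.getElem_set, List.getElem_ofFn]
          split_ifs with h
          · subst h
            simp
          · rw [Equiv.swap_apply_of_ne_of_ne (Fin.succ_ne_zero _)]
            intro h'
            apply h
            have := Fin.succ_injective _ h'
            rw [← this]
      have h2 : (List.ofFn fun i => v (Fin.succ i)).getD p (v 0) = v p.succ := by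
        simp [List.getD]
      simp only [Function.comp, h1, h2]
      rw [← ih, Finset.mul_sum]
      refine Finset.sum_congr rfl fun e _ => ?_
      simp [List.ofFn_succ]

theorem LS_mul (n : ℕ) : ∀ (L : List (Fin 7)) (F : List (Fin 7) → ℝ) (c : ℝ),
    LS n L (fun l => c * F l) = c * LS n L F := by
  induction n with
  | zero => intro L F c; rfl
  | succ n ih =>
    intro L F c
    simp only [LS, ih]
    rw [← List.sum_map_mul_left]
    congr 1
    apply List.map_congr_left
    intro x _
    ring

/-- Table of the components of `phi`, two bits each. -/
def phiN (i a b : Fin 7) : ℤ :=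
  match (0x400800800400400800000800000800040400080400000400400000004800800008000400080008000800040004000800800400400000000040080800040400080000080000040400800004008000040080000
    >>> (2 * (49 * i.val + 7 * a.val + b.val))) % 4 with
  | 0 => 0
  | 1 => 1
  | _ => -1

def phi0Z : Fin 7 → Fin 7 → Fin 7 → ℤ := fun i j k =>
  if (i, j, k) = (0, 1, 2) then -1
  else if (i, j, k) = (0, 3, 4) then -1
  else if (i, j, k) = (0, 5, 6) then -1
  else if (i, j, k) = (1, 3, 5) then -1
  else if (i, j, k) = (1, 4, 6) then 1
  else if (i, j, k) = (2, 3, 6) then 1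
  else if (i, j, k) = (2, 4, 5) then 1
  else 0

theorem phi0_eq (i j k : Fin 7) : phi0 i j k = (phi0Z i j k : ℝ) := by
  unfold phi0 phi0Z
  split_ifs <;> simp

theorem phiZ_eq : ∀ i j k : Fin 7, phi0Z i j k + phi0Z j k i + phi0Z k i j
    - phi0Z j i k - phi0Z i k j - phi0Z k j i = phiN i j k := by
  decide +kernel

theorem phi_eq (i j k : Fin 7) : phi i j k = (phiN i j k : ℝ) := by
  rw [← phiZ_eq]
  have hu : (Finset.univ : Finset (Equiv.Perm (Fin 3))) =
      {1, Equiv.swap 0 1, Equiv.swap 0 2, Equiv.swap 1 2,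
        Equiv.swap 0 1 * Equiv.swap 1 2, Equiv.swap 1 2 * Equiv.swap 0 1} := by decide
  have h01 : (0 : Fin 3) ≠ 1 := by decide
  have h02 : (0 : Fin 3) ≠ 2 := by decide
  have h12 : (1 : Fin 3) ≠ 2 := by decide
  unfold phi
  rw [hu]
  rw [Finset.sum_insert (by decide), Finset.sum_insert (by decide), Finset.sum_insert (by decide),
    Finset.sum_insert (by decide), Finset.sum_insert (by decide), Finset.sum_singleton]
  simp only [Equiv.Perm.sign_mul, Equiv.Perm.sign_swap h01, Equiv.Perm.sign_swap h02,
    Equiv.Perm.sign_swap h12, Equiv.Perm.sign_one, phi0_eq]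
  simp [Equiv.swap_apply_def]
  ring

/-- Choices of the first two entries, weighted, zeros dropped. -/
def pairs (i : Fin 7) (n : ℕ) (L : List (Fin 7)) : List (ℤ × List (Fin 7)) :=
  (choices (n + 1) L).flatMap fun x => (choices n x.2.2).flatMap fun y =>
    if phiN i x.2.1 y.2.1 = 0 then [] else [(x.1 * y.1 * phiN i x.2.1 y.2.1, y.2.2)]

theorem sum_flatMap_real {A B : Type} (l : List A) (f : A → List B) (g : B → ℝ) :
    ((l.flatMap f).map g).sum = (l.map fun x => ((f x).map g).sum).sum := by
  induction l with
  | nil => simp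
  | cons a t ih => simp [ih]

theorem LS_pairs (i : Fin 7) (n : ℕ) (L : List (Fin 7)) (F G : List (Fin 7) → ℝ)
    (h : ∀ a b l, G (a :: b :: l) = (phiN i a b : ℝ) * F l) :
    LS (n + 2) L G = ((pairs i n L).map fun x => (x.1 : ℝ) * LS n x.2 F).sum := by
  unfold pairs
  rw [sum_flatMap_real, LS]
  congr 1
  apply List.map_congr_left
  intro x _
  rw [sum_flatMap_real, LS, ← List.sum_map_mul_left]
  congr 1
  apply List.map_congr_left
  intro y _
  simp only [h, LS_mul]
  split_ifs with h0
  · simp [h0]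
  · simp
    ring

/-- All nonzero terms. -/
def terms (i j l : Fin 7) : List (ℤ × List (Fin 7)) :=
  (pairs i 5 [0, 1, 2, 3, 4, 5, 6]).flatMap fun x => (pairs j 3 x.2).flatMap fun y =>
    (pairs l 1 y.2).map fun z => (x.1 * y.1 * z.1, z.2)

theorem terms_check : ∀ i j l : Fin 7, i ≤ j → j ≤ l → (∀ x ∈ terms i j l, x.2.length = 1) ∧ ∀ k : Fin 7,
    ((terms i j l).map fun x => if x.2.headD 0 = k then x.1 else 0).sum =
      -16 * ((if i = j then 1 else 0) * (if l = k then 1 else 0)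
        + (if i = l then 1 else 0) * (if j = k then 1 else 0)
        + (if j = l then 1 else 0) * (if i = k then 1 else 0)) := by
  decide +kernel

theorem collect (T : List (ℤ × List (Fin 7))) (α : Fin 7 → ℝ) :
    (T.map fun x => (x.1 : ℝ) * α (x.2.headD 0)).sum
      = ∑ k, (((T.map fun x => if x.2.headD 0 = k then x.1 else 0).sum : ℤ) : ℝ) * α k := by
  induction T with
  | nil => simp
  | cons a t ih =>
    simp only [List.map_cons, List.sum_cons, Int.cast_add, add_mul, Finset.sum_add_distrib, ← ih]
    simp

theorem LS_one (L : List (Fin 7)) (α : Fin 7 → ℝ) (h : L.length = 1) :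
    LS 1 L (fun l => α (l.headD 0)) = α (L.headD 0) := by
  obtain ⟨a, rfl⟩ := List.length_eq_one_iff.mp h
  simp [LS, choices]

theorem main_terms (i j l : Fin 7) (α : Fin 7 → ℝ) :
    ∑ σ : Equiv.Perm (Fin 7),
      ((Equiv.Perm.sign σ : ℤ) : ℝ) *
        (phi i (σ 0) (σ 1) * phi j (σ 2) (σ 3) * phi l (σ 4) (σ 5) * α (σ 6))
      = ((terms i j l).map fun x => (x.1 : ℝ) * LS 1 x.2 (fun l => α (l.headD 0))).sum := by
  let F1 : List (Fin 7) → ℝ := fun l => α (l.headD 0)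
  let F3 : List (Fin 7) → ℝ := fun m => match m with
    | a :: b :: t => (phiN l a b : ℝ) * F1 t
    | _ => 0
  let F5 : List (Fin 7) → ℝ := fun m => match m with
    | a :: b :: t => (phiN j a b : ℝ) * F3 t
    | _ => 0
  let F7 : List (Fin 7) → ℝ := fun m => match m with
    | a :: b :: t => (phiN i a b : ℝ) * F5 t
    | _ => 0
  have key := perm_sum_eq_LS 7 id F7
  have hL : List.ofFn (id : Fin 7 → Fin 7) = [0, 1, 2, 3, 4, 5, 6] := by decide
  rw [hL, LS_pairs i 5 _ F5 F7 (fun _ _ _ => rfl)] at key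
  unfold terms
  rw [sum_flatMap_real]
  refine Eq.trans ?_ (key.trans ?_)
  · refine Finset.sum_congr rfl fun σ _ => ?_
    have : List.ofFn (fun x => (id (σ x) : Fin 7))
        = [σ 0, σ 1, σ 2, σ 3, σ 4, σ 5, σ 6] := by simp [List.ofFn_succ]
    rw [this]
    simp only [F7, F5, F3, F1, phi_eq, List.headD_cons]
    ring
  · congr 1
    apply List.map_congr_left
    intro x _
    rw [LS_pairs j 3 _ F3 F5 (fun _ _ _ => rfl), sum_flatMap_real, ← List.sum_map_mul_left]
    congr 1
    apply List.map_congr_left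
    intro y _
    rw [LS_pairs l 1 _ F1 F3 (fun _ _ _ => rfl), List.map_map, ← List.sum_map_mul_left,
      ← List.sum_map_mul_left]
    congr 1
    apply List.map_congr_left
    intro z _
    simp only [Function.comp, F1]
    push_cast
    ring

/-- The left-hand side. -/
noncomputable def lhs (i j l : Fin 7) (α : Fin 7 → ℝ) : ℝ :=
    ∑ σ : Equiv.Perm (Fin 7),
      ((Equiv.Perm.sign σ : ℤ) : ℝ) *
        (phi i (σ 0) (σ 1) * phi j (σ 2) (σ 3) * phi l (σ 4) (σ 5) * α (σ 6))

/-- The right-hand side. -/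
noncomputable def rhs (i j l : Fin 7) (α : Fin 7 → ℝ) : ℝ :=
    -16 * (kdelta i j * α l + kdelta i l * α j + kdelta j l * α i)

theorem lhs_swap12 (i j l : Fin 7) (α : Fin 7 → ℝ) : lhs i j l α = lhs j i l α := by
  unfold lhs
  rw [← Equiv.sum_comp (Equiv.mulRight (Equiv.swap (0 : Fin 7) 2 * Equiv.swap 1 3))]
  refine Finset.sum_congr rfl fun σ _ => ?_
  have h1 : Equiv.Perm.sign (Equiv.swap (0 : Fin 7) 2 * Equiv.swap 1 3) = 1 := by
    rw [Equiv.Perm.sign_mul, Equiv.Perm.sign_swap (by decide), Equiv.Perm.sign_swap (by decide)]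
    rfl
  rw [Equiv.coe_mulRight, Equiv.Perm.sign_mul, h1, mul_one]
  simp [Equiv.swap_apply_def]
  ring_nf
  simp

theorem lhs_swap23 (i j l : Fin 7) (α : Fin 7 → ℝ) : lhs i j l α = lhs i l j α := by
  unfold lhs
  rw [← Equiv.sum_comp (Equiv.mulRight (Equiv.swap (2 : Fin 7) 4 * Equiv.swap 3 5))]
  refine Finset.sum_congr rfl fun σ _ => ?_
  have h1 : Equiv.Perm.sign (Equiv.swap (2 : Fin 7) 4 * Equiv.swap 3 5) = 1 := by
    rw [Equiv.Perm.sign_mul, Equiv.Perm.sign_swap (by decide), Equiv.Perm.sign_swap (by decide)]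
    rfl
  rw [Equiv.coe_mulRight, Equiv.Perm.sign_mul, h1, mul_one]
  simp [Equiv.swap_apply_def]
  ring_nf
  simp

theorem kdelta_comm (i j : Fin 7) : kdelta i j = kdelta j i := by
  simp [kdelta, eq_comm]

theorem rhs_swap12 (i j l : Fin 7) (α : Fin 7 → ℝ) : rhs i j l α = rhs j i l α := by
  unfold rhs
  rw [kdelta_comm j i]
  ring

theorem rhs_swap23 (i j l : Fin 7) (α : Fin 7 → ℝ) : rhs i j l α = rhs i l j α := by
  unfold rhs
  rw [kdelta_comm l j]
  ring

theorem sorted_case (i j l : Fin 7) (α : Fin 7 → ℝ) (hij : i ≤ j) (hjl : j ≤ l) :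
    lhs i j l α = rhs i j l α := by
  unfold lhs rhs
  rw [main_terms]
  have hc := terms_check i j l hij hjl
  have : ((terms i j l).map fun x => (x.1 : ℝ) * LS 1 x.2 (fun l => α (l.headD 0)))
      = (terms i j l).map fun x => (x.1 : ℝ) * α (x.2.headD 0) := by
    apply List.map_congr_left
    intro x hx
    rw [LS_one _ _ (hc.1 x hx)]
  rw [this, collect]
  simp only [hc.2]
  have hs : ∀ m : Fin 7, α m = ∑ k, (if m = k then (1 : ℝ) else 0) * α k := by
    intro m; simp
  rw [hs l, hs j, hs i]
  simp only [kdelta, Finset.mul_sum, ← Finset.sum_add_distrib]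
  refine Finset.sum_congr rfl fun k _ => ?_
  push_cast
  ring

/-- Equation `wtwscubedeq` (coordinate form of Lemma `wtwscubedlemma`) for the
standard G₂-structure on ℝ⁷. -/
theorem wtws_cubed (i j l : Fin 7) (α : Fin 7 → ℝ) :
    ∑ σ : Equiv.Perm (Fin 7),
      ((Equiv.Perm.sign σ : ℤ) : ℝ) *
        (phi i (σ 0) (σ 1) * phi j (σ 2) (σ 3) * phi l (σ 4) (σ 5) * α (σ 6))
      = -16 * (kdelta i j * α l + kdelta i l * α j + kdelta j l * α i) := by
  change lhs i j l α = rhs i j l α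
  rcases le_total i j with h1 | h1 <;> rcases le_total j l with h2 | h2 <;>
    rcases le_total i l with h3 | h3
  · exact sorted_case i j l α h1 h2
  · exact sorted_case i j l α h1 h2
  · rw [lhs_swap23, rhs_swap23]
    exact sorted_case i l j α h3 h2
  · rw [lhs_swap23, rhs_swap23, lhs_swap12, rhs_swap12]
    exact sorted_case l i j α h3 h1
  · rw [lhs_swap12, rhs_swap12]
    exact sorted_case j i l α h1 h3
  · rw [lhs_swap12, rhs_swap12, lhs_swap23, rhs_swap23]
    exact sorted_case j l i α h2 h3
  · rw [lhs_swap12, rhs_swap12, lhs_swap23, rhs_swap23, lhs_swap12, rhs_swap12]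
    exact sorted_case l j i α h2 h1
  · rw [lhs_swap12, rhs_swap12, lhs_swap23, rhs_swap23, lhs_swap12, rhs_swap12]
    exact sorted_case l j i α h2 h1
end
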